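/- arXiv:2507.04228 — 3 statements merged into one kernel-verified Lean document; each statement's English description precedes it below -/
import Mathlib

section
/- Fix i ∈ {1,…,M}, a linear subspace Γ ⊆ E, and X, Y ∈ Γ. If δ ≥ 0 and the block-i upper RIP with constant δ holds at every Z ∈ Γ, i.e. (1/l)·Σ_{j=(i−1)l+1}^{il} ⟨A_j, Z⟩² ≤ (1+δ)·‖Z‖² for all Z ∈ Γ, then (1/(4(1+δ)))·‖P_Γ(∇f_i(Y) − ∇f_i(X))‖² ≤ f_i(Y) − f_i(X) − ⟨∇f_i(X), Y − X⟩. -/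
open RealInnerProductSpace

/-! A least-squares loss is quadratic with a positive semidefinite Hessian `2B`. Hence its Bregman
divergence at `(Y, X)` is `B (Y - X) (Y - X)`, while the gradient difference represents the
functional `2 * B (Y - X) ·`. Testing that functional against the projection `p` of the gradient
difference onto `Γ` and applying Cauchy–Schwarz for `B` gives
`‖p‖ ^ 4 ≤ 4 * B (Y - X) (Y - X) * B p p`. Since `p ∈ Γ`, restricted smoothness bounds `B p p` by
a multiple of `‖p‖ ^ 2`, which cancels. -/

section LeastSquares

variable {E : Type*} [NormedAddCommGroup E] [InnerProductSpace ℝ E]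

theorem norm_sq_starProjection_le_of_isPosSemidef {B : LinearMap.BilinForm ℝ E}
    (hB : B.IsPosSemidef) {Γ : Submodule ℝ E} [Γ.HasOrthogonalProjection] {L : ℝ} (hL : 0 ≤ L)
    (hΓ : ∀ z ∈ Γ, B z z ≤ L * ‖z‖ ^ 2) {d g : E} (hg : ∀ z ∈ Γ, ⟪g, z⟫ = B d z) :
    ‖Γ.starProjection g‖ ^ 2 ≤ L * B d d := by
  set p := Γ.starProjection g
  have hp : p ∈ Γ := Γ.starProjection_apply_mem g
  have hd : 0 ≤ B d d := hB.nonneg d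
  have norm_sq_eq : ‖p‖ ^ 2 = B d p := by
    rw [← hg p hp, real_inner_comm]
    exact (Γ.re_inner_starProjection_eq_normSq g).symm
  rcases eq_or_ne p 0 with hp0 | hp0
  · rw [hp0, norm_zero, zero_pow two_ne_zero]
    exact mul_nonneg hL hd
  · refine le_of_mul_le_mul_right ?_ (pow_pos (norm_pos_iff.mpr hp0) 2)
    calc
      ‖p‖ ^ 2 * ‖p‖ ^ 2 = B d p ^ 2 := by rw [norm_sq_eq, sq]
      _ ≤ B d d * B p p := B.apply_sq_le_of_symm hB.nonneg
          (LinearMap.BilinForm.isSymm_iff.mp hB.isSymm) d p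
      _ ≤ B d d * (L * ‖p‖ ^ 2) := mul_le_mul_of_nonneg_left (hΓ p hp) hd
      _ = L * B d d * ‖p‖ ^ 2 := by ring

variable {ι : Type*}

/-- The least-squares objective of the measurements `⟪A j, X⟫ ≈ y j`, `j ∈ s`, with a common
weight `w`; the block objective `fᵢ` has `w = 1 / l` and `s` the `i`-th block. -/
def leastSquaresLoss (w : ℝ) (s : Finset ι) (A : ι → E) (y : ι → ℝ) (X : E) : ℝ :=
  w * ∑ j ∈ s, (y j - ⟪A j, X⟫) ^ 2

/-- The gradient of `leastSquaresLoss w s A y` at `X`, given by its explicit formula. -/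
def leastSquaresGrad (w : ℝ) (s : Finset ι) (A : ι → E) (y : ι → ℝ) (X : E) : E :=
  (2 * w) • ∑ j ∈ s, (⟪A j, X⟫ - y j) • A j

/-- The Gram form of the measurements, i.e. half the Hessian of `leastSquaresLoss w s A y`. -/
noncomputable def measurementForm (w : ℝ) (s : Finset ι) (A : ι → E) : LinearMap.BilinForm ℝ E :=
  w • ∑ j ∈ s, LinearMap.BilinForm.linMulLin (innerₗ E (A j)) (innerₗ E (A j))

theorem measurementForm_apply (w : ℝ) (s : Finset ι) (A : ι → E) (U V : E) :
    measurementForm w s A U V = w * ∑ j ∈ s, ⟪A j, U⟫ * ⟪A j, V⟫ := by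
  simp [measurementForm, LinearMap.sum_apply]

theorem measurementForm_apply_self (w : ℝ) (s : Finset ι) (A : ι → E) (U : E) :
    measurementForm w s A U U = w * ∑ j ∈ s, ⟪A j, U⟫ ^ 2 := by
  simp only [measurementForm_apply, sq]

theorem measurementForm_isPosSemidef {w : ℝ} (hw : 0 ≤ w) (s : Finset ι) (A : ι → E) :
    (measurementForm w s A).IsPosSemidef where
  eq U V := by simp only [measurementForm_apply, mul_comm]
  nonneg U := by
    rw [measurementForm_apply_self]
    positivity

theorem leastSquaresLoss_sub_sub_inner_grad (w : ℝ) (s : Finset ι) (A : ι → E) (y : ι → ℝ)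
    (X Y : E) :
    leastSquaresLoss w s A y Y - leastSquaresLoss w s A y X - ⟪leastSquaresGrad w s A y X, Y - X⟫ =
      measurementForm w s A (Y - X) (Y - X) := by
  simp only [leastSquaresLoss, leastSquaresGrad, measurementForm_apply_self, real_inner_smul_left,
    sum_inner, inner_sub_right, Finset.mul_sum, ← Finset.sum_sub_distrib]
  exact Finset.sum_congr rfl fun j _ => by ring

theorem inner_leastSquaresGrad_sub (w : ℝ) (s : Finset ι) (A : ι → E) (y : ι → ℝ) (X Y Z : E) :
    ⟪leastSquaresGrad w s A y Y - leastSquaresGrad w s A y X, Z⟫ =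
      2 * measurementForm w s A (Y - X) Z := by
  simp only [leastSquaresGrad, measurementForm_apply, inner_sub_left, real_inner_smul_left,
    sum_inner, inner_sub_right, Finset.mul_sum, ← Finset.sum_sub_distrib]
  exact Finset.sum_congr rfl fun j _ => by ring

theorem stmt_5_general {w : ℝ} (hw : 0 ≤ w) (s : Finset ι) (A : ι → E) (y : ι → ℝ)
    {Γ : Submodule ℝ E} [Γ.HasOrthogonalProjection] {L : ℝ} (hL : 0 < L)
    (hRIP : ∀ Z ∈ Γ, w * ∑ j ∈ s, ⟪A j, Z⟫ ^ 2 ≤ L * ‖Z‖ ^ 2) (X Y : E) :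
    1 / (4 * L) * ‖Γ.starProjection (leastSquaresGrad w s A y Y - leastSquaresGrad w s A y X)‖ ^ 2 ≤
      leastSquaresLoss w s A y Y - leastSquaresLoss w s A y X -
        ⟪leastSquaresGrad w s A y X, Y - X⟫ := by
  set B := measurementForm w s A
  set G := leastSquaresGrad w s A y Y - leastSquaresGrad w s A y X
  have smooth : ∀ Z ∈ Γ, B Z Z ≤ L * ‖Z‖ ^ 2 := fun Z hZ =>
    (measurementForm_apply_self w s A Z).trans_le (hRIP Z hZ)
  have grad_represents : ∀ Z ∈ Γ, ⟪G, Z⟫ = B ((2 : ℝ) • (Y - X)) Z := fun Z _ => by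
    rw [inner_leastSquaresGrad_sub, map_smul, LinearMap.smul_apply, smul_eq_mul]
  have cocoercive : ‖Γ.starProjection G‖ ^ 2 ≤ L * B ((2 : ℝ) • (Y - X)) ((2 : ℝ) • (Y - X)) :=
    norm_sq_starProjection_le_of_isPosSemidef (measurementForm_isPosSemidef hw s A) hL.le smooth
      grad_represents
  rw [leastSquaresLoss_sub_sub_inner_grad, one_div_mul_eq_div, div_le_iff₀ (by positivity)]
  calc
    ‖Γ.starProjection G‖ ^ 2 ≤ L * B ((2 : ℝ) • (Y - X)) ((2 : ℝ) • (Y - X)) := cocoercive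
    _ = B (Y - X) (Y - X) * (4 * L) := by
      simp only [map_smul, LinearMap.smul_apply, smul_eq_mul]
      ring

end LeastSquares

/-- For `X, Y` in a subspace `Γ` on which the block-`i` upper RIP with constant `δ ≥ 0` holds,
`(1/(4(1+δ))) ‖P_Γ(∇fᵢ(Y) - ∇fᵢ(X))‖² ≤ fᵢ(Y) - fᵢ(X) - ⟪∇fᵢ(X), Y - X⟫`. -/
theorem stmt_5 {E : Type*} [NormedAddCommGroup E] [InnerProductSpace ℝ E]
    [FiniteDimensional ℝ E]
    (m l M : ℕ) (hl : 1 ≤ l) (hM : 1 ≤ M) (hm : m = M * l)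
    (A : ℕ → E) (y : ℕ → ℝ) (δ : ℝ) (hδ : 0 ≤ δ)
    (f : ℕ → E → ℝ)
    (hf : ∀ i : ℕ, ∀ Z : E, f i Z =
      (1 / (l : ℝ)) * ∑ j ∈ Finset.Ioc ((i - 1) * l) (i * l), (y j - ⟪A j, Z⟫) ^ 2)
    (gradf : ℕ → E → E)
    (hgradf : ∀ i : ℕ, ∀ Z : E, gradf i Z =
      ((2 : ℝ) / (l : ℝ)) • ∑ j ∈ Finset.Ioc ((i - 1) * l) (i * l), (⟪A j, Z⟫ - y j) • A j)
    (i : ℕ) (hi : i ∈ Finset.Icc 1 M)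
    (Γ : Submodule ℝ E) (X Y : E) (hX : X ∈ Γ) (hY : Y ∈ Γ)
    (hRIP : ∀ Z ∈ Γ,
      (1 / (l : ℝ)) * ∑ j ∈ Finset.Ioc ((i - 1) * l) (i * l), ⟪A j, Z⟫ ^ 2 ≤
        (1 + δ) * ‖Z‖ ^ 2) :
    (1 / (4 * (1 + δ))) * ‖(Submodule.orthogonalProjectionOnto Γ (gradf i Y - gradf i X) : E)‖ ^ 2 ≤
      f i Y - f i X - ⟪gradf i X, Y - X⟫ := by
  simpa only [leastSquaresLoss, leastSquaresGrad, hf, hgradf, mul_one_div,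
    Submodule.starProjection_apply] using
    stmt_5_general (by positivity) _ A y (by positivity) hRIP X Y
end

section
/- Fix i ∈ {1,…,M}, a linear subspace Γ ⊆ E, and X, Y ∈ Γ. If δ ≥ 0 and the block-i upper RIP with constant δ holds at every Z ∈ Γ, i.e. (1/l)·Σ_{j=(i−1)l+1}^{il} ⟨A_j, Z⟩² ≤ (1+δ)·‖Z‖² for all Z ∈ Γ, then ‖P_Γ(∇f_i(X) − ∇f_i(Y))‖² ≤ 2(1+δ)·⟨X − Y, ∇f_i(X) − ∇f_i(Y)⟩. -/
open RealInnerProductSpace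

/-! Write `𝒜 Z = (⟪A j, Z⟫)ⱼ` for the sensing map of block `i`. The difference of the two gradients
is `T (X - Y)` for the positive operator `T = (2 / l) 𝒜* 𝒜`, and the RIP bounds the quadratic form
of `T` on `Γ` by `2 (1 + δ) ‖·‖²`. For `V = X - Y` and `P = P_Γ (T V)`, Cauchy–Schwarz for the
semi-inner product `⟪T ·, ·⟫` gives
`‖P‖⁴ = |⟪T V, P⟫|² ≤ ⟪T V, V⟫ ⟪T P, P⟫ ≤ ⟪T V, V⟫ · 2 (1 + δ) ‖P‖²`, and `‖P‖²` cancels. -/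

section

open InnerProductSpace RCLike

variable {𝕜 E ι : Type*} [RCLike 𝕜] [NormedAddCommGroup E] [InnerProductSpace 𝕜 E]

theorem norm_inner_apply_sq_le_of_isPositive {T : E →ₗ[𝕜] E} (hT : T.IsPositive) (x y : E) :
    ‖inner 𝕜 (T x) y‖ ^ 2 ≤ re (inner 𝕜 (T x) x) * re (inner 𝕜 (T y) y) := by
  let core : PreInnerProductSpace.Core 𝕜 E :=
    { inner u v := inner 𝕜 (T u) v
      conj_inner_symm u v := by rw [inner_conj_symm, hT.isSymmetric]
      re_inner_nonneg := hT.re_inner_nonneg_left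
      add_left u v w := by rw [map_add, inner_add_left]
      smul_left u v r := by rw [map_smul, inner_smul_left] }
  have cauchy_schwarz : ‖inner 𝕜 (T x) y‖ * ‖inner 𝕜 (T y) x‖ ≤
      re (inner 𝕜 (T x) x) * re (inner 𝕜 (T y) y) :=
    InnerProductSpace.Core.inner_mul_inner_self_le (c := core) x y
  rwa [hT.isSymmetric y x, norm_inner_symm y, ← sq] at cauchy_schwarz

theorem inner_starProjection_self (Γ : Submodule 𝕜 E) [Γ.HasOrthogonalProjection] (x : E) :
    inner 𝕜 x (Γ.starProjection x) = (‖Γ.starProjection x‖ : 𝕜) ^ 2 := by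
  rw [← inner_self_eq_norm_sq_to_K, Γ.inner_starProjection_left_eq_right,
    Γ.starProjection_eq_self_iff.mpr (Γ.starProjection_apply_mem x)]

theorem norm_starProjection_apply_sq_le_of_isPositive {T : E →ₗ[𝕜] E} (hT : T.IsPositive)
    (Γ : Submodule 𝕜 E) [Γ.HasOrthogonalProjection] {c : ℝ} (hc : 0 ≤ c)
    (hTΓ : ∀ z ∈ Γ, re (inner 𝕜 (T z) z) ≤ c * ‖z‖ ^ 2) (v : E) :
    ‖Γ.starProjection (T v)‖ ^ 2 ≤ c * re (inner 𝕜 (T v) v) := by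
  have hv : 0 ≤ re (inner 𝕜 (T v) v) := hT.re_inner_nonneg_left v
  set p := Γ.starProjection (T v) with hp
  obtain hp0 | hp0 := (sq_nonneg ‖p‖).eq_or_lt
  · rw [← hp0]
    positivity
  refine le_of_mul_le_mul_right ?_ hp0
  calc ‖p‖ ^ 2 * ‖p‖ ^ 2 = ‖inner 𝕜 (T v) p‖ ^ 2 := by
        rw [hp, inner_starProjection_self, norm_pow, norm_ofReal, abs_norm, sq (_ ^ 2)]
    _ ≤ re (inner 𝕜 (T v) v) * re (inner 𝕜 (T p) p) := norm_inner_apply_sq_le_of_isPositive hT v p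
    _ ≤ re (inner 𝕜 (T v) v) * (c * ‖p‖ ^ 2) := by
        gcongr
        exact hTΓ p (Γ.starProjection_apply_mem _)
    _ = c * re (inner 𝕜 (T v) v) * ‖p‖ ^ 2 := by ring

variable (𝕜) in
/-- The frame operator `𝒜* 𝒜` of a finite family of vectors, where `𝒜 Z = (⟪A j, Z⟫)_{j ∈ s}`; it
is the linear part of the gradient of a least-squares objective, up to a scalar. It is encoded as a
sum of rank-one operators because Mathlib's adjoint is only defined on complete spaces. -/
noncomputable def frameOperator (s : Finset ι) (A : ι → E) : E →L[𝕜] E :=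
  ∑ j ∈ s, rankOne 𝕜 (A j) (A j)

theorem frameOperator_apply (s : Finset ι) (A : ι → E) (Z : E) :
    frameOperator 𝕜 s A Z = ∑ j ∈ s, inner 𝕜 (A j) Z • A j := by
  simp only [frameOperator, sum_apply, rankOne_apply]

theorem isPositive_frameOperator (s : Finset ι) (A : ι → E) :
    (frameOperator 𝕜 s A).IsPositive :=
  ContinuousLinearMap.isPositive_sum s fun j _ => isPositive_rankOne_self (A j)

theorem re_inner_frameOperator_self (s : Finset ι) (A : ι → E) (Z : E) :
    re (inner 𝕜 (frameOperator 𝕜 s A Z) Z) = ∑ j ∈ s, ‖inner 𝕜 (A j) Z‖ ^ 2 := by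
  simp only [frameOperator_apply, sum_inner, inner_smul_left, RCLike.conj_mul, map_sum,
    ← ofReal_pow, ofReal_re]

theorem sum_residual_smul_sub (s : Finset ι) (A : ι → E) (y : ι → 𝕜) (X Y : E) :
    ∑ j ∈ s, (inner 𝕜 (A j) X - y j) • A j - ∑ j ∈ s, (inner 𝕜 (A j) Y - y j) • A j =
      frameOperator 𝕜 s A (X - Y) := by
  simp only [frameOperator_apply, ← Finset.sum_sub_distrib, ← sub_smul, sub_sub_sub_cancel_right,
    inner_sub_right]

/-- `gradf` is the gradient of the objective `Z ↦ t * ∑ j ∈ s, ‖y j - ⟪A j, Z⟫‖ ^ 2`. -/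
theorem stmt_6_general (s : Finset ι) (A : ι → E) (y : ι → 𝕜) {t c : ℝ} (ht : 0 ≤ t) (hc : 0 ≤ c)
    {gradf : E → E}
    (hgradf : ∀ Z, gradf Z = ((2 * t : ℝ) : 𝕜) • ∑ j ∈ s, (inner 𝕜 (A j) Z - y j) • A j)
    (Γ : Submodule 𝕜 E) [Γ.HasOrthogonalProjection]
    (hRIP : ∀ Z ∈ Γ, t * ∑ j ∈ s, ‖inner 𝕜 (A j) Z‖ ^ 2 ≤ c * ‖Z‖ ^ 2) (X Y : E) :
    ‖Γ.starProjection (gradf X - gradf Y)‖ ^ 2 ≤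
      2 * c * re (inner 𝕜 (X - Y) (gradf X - gradf Y)) := by
  let T : E →L[𝕜] E := ((2 * t : ℝ) : 𝕜) • frameOperator 𝕜 s A
  have hT : T.IsPositive :=
    (isPositive_frameOperator s A).smul_of_nonneg (ofReal_nonneg.mpr (by positivity))
  have hTΓ : ∀ Z ∈ Γ, re (inner 𝕜 (T Z) Z) ≤ 2 * c * ‖Z‖ ^ 2 := fun Z hZ => by
    rw [smul_apply, inner_smul_left, conj_ofReal, re_ofReal_mul,
      re_inner_frameOperator_self]
    linarith [hRIP Z hZ]
  have grad_sub : gradf X - gradf Y = T (X - Y) := by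
    rw [hgradf, hgradf, ← smul_sub, sum_residual_smul_sub, smul_apply]
  rw [grad_sub, inner_re_symm]
  exact norm_starProjection_apply_sq_le_of_isPositive hT.toLinearMap Γ (by positivity) hTΓ (X - Y)

end

/-- For `X, Y` in a subspace `Γ` on which the block-`i` upper RIP with constant `δ ≥ 0` holds,
`‖P_Γ(∇fᵢ(X) - ∇fᵢ(Y))‖² ≤ 2(1+δ) ⟪X - Y, ∇fᵢ(X) - ∇fᵢ(Y)⟫`. -/
theorem stmt_6 {E : Type*} [NormedAddCommGroup E] [InnerProductSpace ℝ E]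
    [FiniteDimensional ℝ E]
    (m l M : ℕ) (hl : 1 ≤ l) (hM : 1 ≤ M) (hm : m = M * l)
    (A : ℕ → E) (y : ℕ → ℝ) (δ : ℝ) (hδ : 0 ≤ δ)
    (gradf : ℕ → E → E)
    (hgradf : ∀ i : ℕ, ∀ Z : E, gradf i Z =
      ((2 : ℝ) / (l : ℝ)) • ∑ j ∈ Finset.Ioc ((i - 1) * l) (i * l), (⟪A j, Z⟫ - y j) • A j)
    (i : ℕ) (hi : i ∈ Finset.Icc 1 M)
    (Γ : Submodule ℝ E) (X Y : E) (hX : X ∈ Γ) (hY : Y ∈ Γ)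
    (hRIP : ∀ Z ∈ Γ,
      (1 / (l : ℝ)) * ∑ j ∈ Finset.Ioc ((i - 1) * l) (i * l), ⟪A j, Z⟫ ^ 2 ≤
        (1 + δ) * ‖Z‖ ^ 2) :
    ‖(Submodule.orthogonalProjectionOnto Γ (gradf i X - gradf i Y) : E)‖ ^ 2 ≤
      2 * (1 + δ) * ⟪X - Y, gradf i X - gradf i Y⟫ := by
  simpa using stmt_6_general (Finset.Ioc ((i - 1) * l) (i * l)) A y (t := 1 / l) (c := 1 + δ)
    (by positivity) (by linarith) (fun Z => by simpa [div_eq_mul_inv] using hgradf i Z) Γ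
    (by simpa using hRIP) X Y
end

section
/- Fix i ∈ {1,…,M}, a linear subspace Γ ⊆ E, and X, Y ∈ Γ. Suppose 0 ≤ δ < 1, the block-i upper RIP with constant δ holds at every Z ∈ Γ (i.e. (1/l)·Σ_{j=(i−1)l+1}^{il} ⟨A_j, Z⟩² ≤ (1+δ)·‖Z‖² for all Z ∈ Γ), the block-i lower RIP with constant δ holds at X − Y (i.e. (1−δ)·‖X−Y‖² ≤ (1/l)·Σ_{j=(i−1)l+1}^{il} ⟨A_j, X−Y⟩²), and 0 ≤ η ≤ 1/(1+δ). Then ‖X − Y − η·P_Γ(∇f_i(X) − ∇f_i(Y))‖² ≤ (1 + η²·δ⁺·δ⁻ − 2η·δ⁻)·‖X − Y‖², where δ⁻ = 2(1−δ) and δ⁺ = 2(1+δ). -/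
open RealInnerProductSpace

/-!
The difference of two gradients of a least-squares loss is `T D`, where `D = X - Y` and `T` is the
constant, positive Hessian. If `P` projects onto `Γ` and `⟪T Z, Z⟫ ≤ L ‖Z‖²` on `Γ`, then
Cauchy–Schwarz for the form `⟪T ·, ·⟫`, applied to `D` and `P (T D)`, gives the restricted
cocoercivity bound `‖P (T D)‖² ≤ L ⟪T D, D⟫`. Hence, for `D ∈ Γ`,
`‖D - η P (T D)‖² ≤ ‖D‖² - η (2 - η L) ⟪T D, D⟫`, and since `η L ≤ 2` a lower bound
`μ ‖D‖² ≤ ⟪T D, D⟫` at the single vector `D` suffices.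
-/

section PositiveOperator

variable {E : Type*} [NormedAddCommGroup E] [InnerProductSpace ℝ E] {T : E →ₗ[ℝ] E}

theorem sq_inner_map_le_of_isPositive (hT : T.IsPositive) (x z : E) :
    ⟪T x, z⟫ ^ 2 ≤ ⟪T x, x⟫ * ⟪T z, z⟫ := by
  have hsymm : (innerₗ E ∘ₗ T).IsSymm :=
    ⟨fun u v => (hT.isSymmetric u v).trans (real_inner_comm _ _)⟩
  exact LinearMap.BilinForm.apply_sq_le_of_symm (innerₗ E ∘ₗ T) hT.inner_nonneg_left hsymm x z

variable {Γ : Submodule ℝ E} [Γ.HasOrthogonalProjection] {L : ℝ}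

theorem norm_starProjection_map_sq_le (hT : T.IsPositive) (hL : 0 ≤ L)
    (hupper : ∀ z ∈ Γ, ⟪T z, z⟫ ≤ L * ‖z‖ ^ 2) (x : E) :
    ‖Γ.starProjection (T x)‖ ^ 2 ≤ L * ⟪T x, x⟫ := by
  set p := Γ.starProjection (T x)
  have hp : p ∈ Γ := Γ.starProjection_apply_mem (T x)
  have hTxp : ⟪T x, p⟫ = ‖p‖ ^ 2 := by
    rw [← real_inner_self_eq_norm_sq, Γ.inner_starProjection_left_eq_right,
      Γ.starProjection_eq_self_iff.mpr hp]
  have hTx : 0 ≤ ⟪T x, x⟫ := hT.inner_nonneg_left x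
  have hcauchy : ‖p‖ ^ 2 * ‖p‖ ^ 2 ≤ L * ⟪T x, x⟫ * ‖p‖ ^ 2 :=
    calc ‖p‖ ^ 2 * ‖p‖ ^ 2 = ⟪T x, p⟫ ^ 2 := by rw [hTxp, sq (‖p‖ ^ 2)]
      _ ≤ ⟪T x, x⟫ * ⟪T p, p⟫ := sq_inner_map_le_of_isPositive hT x p
      _ ≤ ⟪T x, x⟫ * (L * ‖p‖ ^ 2) := by gcongr; exact hupper p hp
      _ = L * ⟪T x, x⟫ * ‖p‖ ^ 2 := by ring
  rcases (sq_nonneg ‖p‖).eq_or_lt with hzero | hpos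
  · rw [← hzero]
    positivity
  · exact le_of_mul_le_mul_right hcauchy hpos

theorem norm_sub_smul_starProjection_map_sq_le {μ η : ℝ} {x : E} (hT : T.IsPositive) (hL : 0 ≤ L)
    (hupper : ∀ z ∈ Γ, ⟪T z, z⟫ ≤ L * ‖z‖ ^ 2) (hx : x ∈ Γ)
    (hlower : μ * ‖x‖ ^ 2 ≤ ⟪T x, x⟫) (hη : 0 ≤ η) (hηL : η * L ≤ 2) :
    ‖x - η • Γ.starProjection (T x)‖ ^ 2 ≤ (1 + η ^ 2 * L * μ - 2 * η * μ) * ‖x‖ ^ 2 := by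
  have hinner : ⟪x, Γ.starProjection (T x)⟫ = ⟪T x, x⟫ := by
    rw [← Γ.inner_starProjection_left_eq_right, Γ.starProjection_eq_self_iff.mpr hx,
      real_inner_comm]
  have hstep : 0 ≤ η * (2 - η * L) := mul_nonneg hη (sub_nonneg.mpr hηL)
  calc ‖x - η • Γ.starProjection (T x)‖ ^ 2
      = ‖x‖ ^ 2 - 2 * η * ⟪T x, x⟫ + η ^ 2 * ‖Γ.starProjection (T x)‖ ^ 2 := by
        rw [norm_sub_sq_real, real_inner_smul_right, hinner, norm_smul, mul_pow,
          Real.norm_eq_abs, sq_abs, mul_assoc]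
    _ ≤ ‖x‖ ^ 2 - 2 * η * ⟪T x, x⟫ + η ^ 2 * (L * ⟪T x, x⟫) := by
        gcongr
        exact norm_starProjection_map_sq_le hT hL hupper x
    _ = ‖x‖ ^ 2 - η * (2 - η * L) * ⟪T x, x⟫ := by ring
    _ ≤ ‖x‖ ^ 2 - η * (2 - η * L) * (μ * ‖x‖ ^ 2) :=
        sub_le_sub_left (mul_le_mul_of_nonneg_left hlower hstep) _
    _ = (1 + η ^ 2 * L * μ - 2 * η * μ) * ‖x‖ ^ 2 := by ring

end PositiveOperator

section LeastSquares

variable {E ι : Type*} [NormedAddCommGroup E] [InnerProductSpace ℝ E]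

/-- The gradient of the least-squares loss `X ↦ c ∑ⱼ (yⱼ - ⟪Aⱼ, X⟫)²`, in closed form; a block loss
averaged over `l` measurements has `c = 1 / l`. -/
noncomputable def leastSquaresGradient (c : ℝ) (s : Finset ι) (A : ι → E) (y : ι → ℝ) (X : E) : E :=
  (2 * c) • ∑ j ∈ s, (⟪A j, X⟫ - y j) • A j

/-- The Hessian `2c ∑ⱼ Aⱼ ⊗ Aⱼ` of the least-squares loss `X ↦ c ∑ⱼ (yⱼ - ⟪Aⱼ, X⟫)²`; it depends
neither on `X` nor on the data `y`. -/
noncomputable def leastSquaresHessian (c : ℝ) (s : Finset ι) (A : ι → E) : E →L[ℝ] E :=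
  (2 * c) • ∑ j ∈ s, InnerProductSpace.rankOne ℝ (A j) (A j)

theorem leastSquaresHessian_apply (c : ℝ) (s : Finset ι) (A : ι → E) (Z : E) :
    leastSquaresHessian c s A Z = (2 * c) • ∑ j ∈ s, ⟪A j, Z⟫ • A j := by
  simp [leastSquaresHessian]

theorem isPositive_leastSquaresHessian {c : ℝ} (hc : 0 ≤ c) (s : Finset ι) (A : ι → E) :
    (leastSquaresHessian c s A).IsPositive :=
  (ContinuousLinearMap.isPositive_sum s fun _ _ =>
    InnerProductSpace.isPositive_rankOne_self _).smul_of_nonneg (by positivity)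

theorem inner_leastSquaresHessian_self (c : ℝ) (s : Finset ι) (A : ι → E) (Z : E) :
    ⟪leastSquaresHessian c s A Z, Z⟫ = 2 * (c * ∑ j ∈ s, ⟪A j, Z⟫ ^ 2) := by
  simp only [leastSquaresHessian_apply, real_inner_smul_left, sum_inner, ← sq, mul_assoc]

theorem leastSquaresGradient_sub (c : ℝ) (s : Finset ι) (A : ι → E) (y : ι → ℝ) (X Y : E) :
    leastSquaresGradient c s A y X - leastSquaresGradient c s A y Y =
      leastSquaresHessian c s A (X - Y) := by
  simp only [leastSquaresGradient, leastSquaresHessian_apply, ← smul_sub,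
    ← Finset.sum_sub_distrib, ← sub_smul, sub_sub_sub_cancel_right, ← inner_sub_right]

theorem stmt_9_general {c L μ η : ℝ} (hc : 0 ≤ c) (hL : 0 ≤ L) (hη : 0 ≤ η) (hηL : η * L ≤ 1)
    {s : Finset ι} {A : ι → E} (y : ι → ℝ)
    {Γ : Submodule ℝ E} [Γ.HasOrthogonalProjection] {X Y : E} (hXY : X - Y ∈ Γ)
    (hupper : ∀ Z ∈ Γ, c * ∑ j ∈ s, ⟪A j, Z⟫ ^ 2 ≤ L * ‖Z‖ ^ 2)
    (hlower : μ * ‖X - Y‖ ^ 2 ≤ c * ∑ j ∈ s, ⟪A j, X - Y⟫ ^ 2) :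
    ‖X - Y - η • Γ.starProjection
        (leastSquaresGradient c s A y X - leastSquaresGradient c s A y Y)‖ ^ 2 ≤
      (1 + η ^ 2 * (2 * L) * (2 * μ) - 2 * η * (2 * μ)) * ‖X - Y‖ ^ 2 := by
  rw [leastSquaresGradient_sub]
  refine norm_sub_smul_starProjection_map_sq_le
    (T := (leastSquaresHessian c s A).toLinearMap) (isPositive_leastSquaresHessian hc s A)
    (by positivity) (fun Z hZ => ?_) hXY ?_ hη (by linarith)
  · rw [ContinuousLinearMap.coe_coe, inner_leastSquaresHessian_self]
    linarith [hupper Z hZ]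
  · rw [ContinuousLinearMap.coe_coe, inner_leastSquaresHessian_self]
    linarith

end LeastSquares

/-- Block version: for `X, Y` in a subspace `Γ` on which the block-`i` upper RIP with
constant `0 ≤ δ < 1` holds, if the block-`i` lower RIP holds at `X - Y` and
`0 ≤ η ≤ 1/(1+δ)`, then
`‖X - Y - η P_Γ(∇fᵢ(X) - ∇fᵢ(Y))‖² ≤ (1 + η²δ⁺δ⁻ - 2ηδ⁻)‖X - Y‖²`,
where `δ⁻ = 2(1-δ)` and `δ⁺ = 2(1+δ)`. -/
theorem stmt_9 {E : Type*} [NormedAddCommGroup E] [InnerProductSpace ℝ E]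
    [FiniteDimensional ℝ E]
    (m l M : ℕ) (hl : 1 ≤ l) (hM : 1 ≤ M) (hm : m = M * l)
    (A : ℕ → E) (y : ℕ → ℝ) (δ η : ℝ)
    (hδ0 : 0 ≤ δ) (hδ1 : δ < 1) (hη0 : 0 ≤ η) (hη1 : η ≤ 1 / (1 + δ))
    (gradf : ℕ → E → E)
    (hgradf : ∀ i : ℕ, ∀ Z : E, gradf i Z =
      ((2 : ℝ) / (l : ℝ)) • ∑ j ∈ Finset.Ioc ((i - 1) * l) (i * l), (⟪A j, Z⟫ - y j) • A j)
    (i : ℕ) (hi : i ∈ Finset.Icc 1 M)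
    (Γ : Submodule ℝ E) (X Y : E) (hX : X ∈ Γ) (hY : Y ∈ Γ)
    (hupper : ∀ Z ∈ Γ,
      (1 / (l : ℝ)) * ∑ j ∈ Finset.Ioc ((i - 1) * l) (i * l), ⟪A j, Z⟫ ^ 2 ≤
        (1 + δ) * ‖Z‖ ^ 2)
    (hlower : (1 - δ) * ‖X - Y‖ ^ 2 ≤
      (1 / (l : ℝ)) * ∑ j ∈ Finset.Ioc ((i - 1) * l) (i * l), ⟪A j, X - Y⟫ ^ 2)
    (δm δp : ℝ) (hδm : δm = 2 * (1 - δ)) (hδp : δp = 2 * (1 + δ)) :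
    ‖X - Y - η • (Submodule.orthogonalProjectionOnto Γ (gradf i X - gradf i Y) : E)‖ ^ 2 ≤
      (1 + η ^ 2 * δp * δm - 2 * η * δm) * ‖X - Y‖ ^ 2 := by
  simpa only [hδm, hδp, hgradf, leastSquaresGradient, mul_one_div,
    Γ.coe_orthogonalProjectionOnto_apply] using
    stmt_9_general (by positivity) (by positivity) hη0 ((le_div_iff₀ (by positivity)).mp hη1) y
      (Γ.sub_mem hX hY) hupper hlower
end
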